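/- Let □_q^even (resp. □_q^odd) denote the subalgebra of □_q generated by x₀, x₂ (resp. x₁, x₃). Then the multiplication map □_q^even ⊗ □_q^odd → □_q, u ⊗ v ↦ uv, is an isomorphism of F-vector spaces. -/

import Mathlib

/-!
Since `x₁` and `x₃` move past `x₀` and `x₂` up to a scalar and a constant, every element of `□_q` is
a sum of products `uv` with `u` even and `v` odd; this gives surjectivity
(`mul_even_odd_eq_top`).

For injectivity, let `U` be the algebra on two generators with only the two `q`-Serre relations.
It maps onto the even and onto the odd subalgebra, and it suffices to make `□_q` act on `U ⊗ U`
so that `uv · (1 ⊗ 1) = u ⊗ v` for `u` in the even and `v` in the odd copy of `U`. The even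
generators act by left multiplication on the first factor. An odd generator `x` acts by
`u ⊗ v ↦ σ(u) ⊗ xv + δ(u) ⊗ v`, where `σ` is an automorphism of `U` scaling the generators and `δ`
is a `σ`-derivation; the pair is encoded by an algebra map from `U` to upper triangular
`2 × 2` matrices over `U` (`theta`). The even Serre relations and the mixed relations are immediate.
For the odd ones, the Serre expression in the odd operators skew-commutes with the even
generators (`qSerre_mul_of_skew`) and kills `1 ⊗ U`, hence it vanishes.
-/


noncomputable section

/-- The `q`-Serre expression `u³v − [3]_q u²vu + [3]_q uvu² − vu³`,
where `[3]_q = (q³ − q⁻³)/(q − q⁻¹)`. -/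
def qSerre {F : Type*} [Field F] (q : F) {A : Type*} [Ring A] [Algebra F A] (u v : A) : A :=
  u ^ 3 * v - ((q ^ 3 - q⁻¹ ^ 3) / (q - q⁻¹)) • (u ^ 2 * v * u)
    + ((q ^ 3 - q⁻¹ ^ 3) / (q - q⁻¹)) • (u * v * u ^ 2) - v * u ^ 3
/-- The defining relations of the algebra `□_q`. -/
inductive BoxRel (F : Type*) [Field F] (q : F) :
    FreeAlgebra F (ZMod 4) → FreeAlgebra F (ZMod 4) → Prop
  | weyl (i : ZMod 4) : BoxRel F q
      ((q - q⁻¹)⁻¹ • (q • (FreeAlgebra.ι F i * FreeAlgebra.ι F (i + 1))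
        - q⁻¹ • (FreeAlgebra.ι F (i + 1) * FreeAlgebra.ι F i))) 1
  | serre (i : ZMod 4) : BoxRel F q (qSerre q (FreeAlgebra.ι F i) (FreeAlgebra.ι F (i + 2))) 0

/-- The algebra `□_q`. -/
abbrev Box (F : Type*) [Field F] (q : F) := RingQuot (BoxRel F q)

/-- The generators `x_i` of `□_q`. -/
def bx (F : Type*) [Field F] (q : F) (i : ZMod 4) : Box F q :=
  RingQuot.mkAlgHom F (BoxRel F q) (FreeAlgebra.ι F i)

/-! ### `q`-Serre expressions -/

section Serre

variable {F : Type*} [Field F] {q : F}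

theorem sub_inv_ne (hq : q ≠ 0) (hq2 : q ^ 2 ≠ 1) : q - q⁻¹ ≠ 0 := by
  intro h0
  apply hq2
  rw [sub_eq_zero] at h0
  rw [pow_two]
  nth_rewrite 1 [h0]
  exact inv_mul_cancel₀ hq

/-- The closed form `[3]_q = q² + 1 + q⁻²`. -/
theorem three_q (hq : q ≠ 0) (hq2 : q ^ 2 ≠ 1) :
    (q ^ 3 - q⁻¹ ^ 3) / (q - q⁻¹) = q ^ 2 + 1 + (q ^ 2)⁻¹ := by
  rw [div_eq_iff (sub_inv_ne hq hq2)]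
  field_simp
  ring

theorem map_qSerre {A B : Type*} [Ring A] [Algebra F A] [Ring B] [Algebra F B]
    (f : A →ₐ[F] B) (u v : A) : f (qSerre q u v) = qSerre q (f u) (f v) := by
  simp [qSerre]

/-- If `a` and `b` skew-commute with `c` up to constants, with inverse factors `s` and `t`, then the
Serre expression in `a, b` skew-commutes with `c` exactly: all lower order terms cancel. -/
theorem qSerre_mul_of_skew {A : Type*} [Ring A] [Algebra F A] {s t : F} (hst : s * t = 1)
    (hk : (q ^ 3 - q⁻¹ ^ 3) / (q - q⁻¹) = s + 1 + t) {a b c : A}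
    (ha : a * c = s • (c * a) + (1 - s) • 1) (hb : b * c = t • (c * b) + (1 - t) • 1) :
    qSerre q a b * c = s ^ 2 • (c * qSerre q a b) := by
  have ha' : ∀ z, a * (c * z) = s • (c * (a * z)) + (1 - s) • z := fun z => by
    rw [← mul_assoc, ha]; simp [add_mul, mul_assoc]
  have hb' : ∀ z, b * (c * z) = t • (c * (b * z)) + (1 - t) • z := fun z => by
    rw [← mul_assoc, hb]; simp [add_mul, mul_assoc]
  have hs : s ≠ 0 := left_ne_zero_of_mul_eq_one hst
  obtain rfl : t = s⁻¹ := eq_inv_of_mul_eq_one_right hst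
  unfold qSerre
  rw [hk]
  simp only [pow_succ, pow_zero, one_mul, mul_assoc, sub_mul, add_mul, mul_sub, mul_add,
    smul_mul_assoc, mul_smul_comm, ha, hb, ha', hb', mul_one]
  match_scalars <;> field_simp <;> ring

/-- The image of a generator `y` under `u ↦ [[σ(u), δ(u)], [0, u]]`, where `σ(y) = s y` and
`δ(y) = 1 - s`. -/
def skewMat {A : Type*} [Ring A] [Algebra F A] (s : F) (y : A) : Matrix (Fin 2) (Fin 2) A :=
  !![s • y, (1 - s) • 1; 0, y]

/-- The `σ`-derivation `δ` annihilates the Serre expression already in the free algebra, so the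
matrices satisfy any Serre relation that the generators satisfy. -/
theorem qSerre_skewMat {A : Type*} [Ring A] [Algebra F A] {s t : F} (hst : s * t = 1)
    (hk : (q ^ 3 - q⁻¹ ^ 3) / (q - q⁻¹) = s + 1 + t) {a b : A} (hab : qSerre q a b = 0) :
    qSerre q (skewMat s a) (skewMat t b) = 0 := by
  have hs : s ≠ 0 := left_ne_zero_of_mul_eq_one hst
  obtain rfl : t = s⁻¹ := eq_inv_of_mul_eq_one_right hst
  have h00 : qSerre q (s • a) (s⁻¹ • b) = s ^ 2 • qSerre q a b := by
    unfold qSerre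
    simp only [pow_succ, pow_zero, one_mul, mul_assoc, smul_mul_assoc, mul_smul_comm]
    match_scalars <;> field_simp
  rw [hab, smul_zero] at h00
  unfold qSerre at h00 hab ⊢
  rw [hk] at h00 hab ⊢
  simp only [pow_succ, pow_zero, one_mul] at h00 hab ⊢
  ext i j
  fin_cases i <;> fin_cases j
  · refine Eq.trans ?_ h00
    simp [skewMat]
    module
  · simp only [skewMat, Matrix.mul_fin_two, Matrix.smul_of,
      Matrix.smul_cons, Matrix.smul_empty, Matrix.add_apply, Matrix.sub_apply, Matrix.of_apply,
      Matrix.cons_val', Matrix.cons_val_zero, Matrix.cons_val_one, Matrix.zero_apply,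
      Fin.zero_eta, Fin.mk_one,
      mul_zero, zero_mul, add_zero, add_mul, mul_add, smul_mul_assoc, mul_smul_comm,
      mul_one, one_mul, mul_assoc]
    match_scalars <;> field_simp <;> ring
  · simp [skewMat]
  · simpa [skewMat, pow_succ, Matrix.mul_apply, Fin.sum_univ_two] using hab

end Serre

/-! ### The algebra with only Serre relations -/

/-- The two `q`-Serre relations between two generators. -/
inductive SerreRel (F : Type*) [Field F] (q : F) : FreeAlgebra F Bool → FreeAlgebra F Bool → Prop
  | serre (i : Bool) : SerreRel F q (qSerre q (FreeAlgebra.ι F i) (FreeAlgebra.ι F (!i))) 0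

/-- The algebra on two generators subject only to the two `q`-Serre relations. It is not reducible:
its additive structure then comes from the single `Ring` instance below, which lets the ring of
endomorphisms of `SerreAlg F q ⊗ SerreAlg F q` be found. -/
def SerreAlg (F : Type*) [Field F] (q : F) := RingQuot (SerreRel F q)

instance (F : Type*) [Field F] (q : F) : Ring (SerreAlg F q) :=
  inferInstanceAs (Ring (RingQuot (SerreRel F q)))

instance (F : Type*) [Field F] (q : F) : Algebra F (SerreAlg F q) :=
  inferInstanceAs (Algebra F (RingQuot (SerreRel F q)))

/-- The quotient map onto `SerreAlg F q`. -/
def SerreAlg.mk (F : Type*) [Field F] (q : F) : FreeAlgebra F Bool →ₐ[F] SerreAlg F q :=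
  RingQuot.mkAlgHom F (SerreRel F q)

/-- The generators of `SerreAlg F q`. -/
def sy (F : Type*) [Field F] (q : F) (i : Bool) : SerreAlg F q :=
  SerreAlg.mk F q (FreeAlgebra.ι F i)

section SerreAlg

variable {F : Type*} [Field F] {q : F}

theorem qSerre_sy (i : Bool) : qSerre q (sy F q i) (sy F q (!i)) = 0 := by
  rw [sy, sy, ← map_qSerre]
  exact (RingQuot.mkAlgHom_rel F (SerreRel.serre i)).trans (map_zero (SerreAlg.mk F q))

/-- Left multiplication by generators suffices in an induction over a free algebra. -/
theorem free_induction {X : Type*} {p : FreeAlgebra F X → Prop} (one : p 1)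
    (mul : ∀ i u, p u → p (FreeAlgebra.ι F i * u)) (add : ∀ u v, p u → p v → p (u + v))
    (smul : ∀ (c : F) u, p u → p (c • u)) (u : FreeAlgebra F X) : p u := by
  suffices h : ∀ w, p w → p (u * w) by simpa using h 1 one
  induction u using FreeAlgebra.induction with
  | grade0 r => exact fun w hw => by simpa [← Algebra.smul_def] using smul r w hw
  | grade1 i => exact fun w hw => mul i w hw
  | mul a b ha hb => exact fun w hw => by rw [mul_assoc]; exact ha _ (hb _ hw)
  | add a b ha hb => exact fun w hw => by rw [add_mul]; exact add _ _ (ha _ hw) (hb _ hw)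

theorem sy_induction {p : SerreAlg F q → Prop} (one : p 1)
    (mul : ∀ i u, p u → p (sy F q i * u)) (add : ∀ u v, p u → p v → p (u + v))
    (smul : ∀ (c : F) u, p u → p (c • u)) (u : SerreAlg F q) : p u := by
  obtain ⟨u, rfl⟩ : ∃ w, SerreAlg.mk F q w = u :=
    RingQuot.mkAlgHom_surjective F (SerreRel F q) u
  induction u using free_induction with
  | one => simpa using one
  | mul i u hu => rw [map_mul]; exact mul i _ hu
  | add u v hu hv => rw [map_add]; exact add _ _ hu hv
  | smul c u hu => rw [map_smul]; exact smul c _ hu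

/-- The algebra map out of `SerreAlg F q` given by two elements satisfying the Serre relations. -/
def serreLift {A : Type*} [Ring A] [Algebra F A] (f : Bool → A)
    (hf : ∀ i, qSerre q (f i) (f (!i)) = 0) : SerreAlg F q →ₐ[F] A :=
  RingQuot.liftAlgHom F ⟨FreeAlgebra.lift F f, by
    rintro _ _ ⟨i⟩
    rw [map_qSerre, map_zero, FreeAlgebra.lift_ι_apply, FreeAlgebra.lift_ι_apply, hf]⟩

@[simp] theorem serreLift_sy {A : Type*} [Ring A] [Algebra F A] (f : Bool → A)
    (hf : ∀ i, qSerre q (f i) (f (!i)) = 0) (i : Bool) : serreLift f hf (sy F q i) = f i := by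
  exact (RingQuot.liftAlgHom_mkAlgHom_apply F _ _ _).trans (FreeAlgebra.lift_ι_apply _ _)

theorem adjoin_sy : Algebra.adjoin F {sy F q false, sy F q true} = ⊤ := by
  refine eq_top_iff.2 fun u hu => ?_
  clear hu
  induction u using sy_induction with
  | one => exact one_mem _
  | mul i u hu => exact mul_mem (Algebra.subset_adjoin (by cases i <;> simp)) hu
  | add u v hu hv => exact add_mem hu hv
  | smul c u hu => exact Subalgebra.smul_mem _ hu c

theorem range_serreLift {A : Type*} [Ring A] [Algebra F A] (f : Bool → A)
    (hf : ∀ i, qSerre q (f i) (f (!i)) = 0) :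
    (serreLift f hf).range = Algebra.adjoin F {f false, f true} := by
  rw [← Algebra.map_top, ← adjoin_sy, AlgHom.map_adjoin, Set.image_pair, serreLift_sy,
    serreLift_sy]

/-- The scalar by which an odd generator moves past an even one: `q²` if the two labels agree,
`q⁻²` otherwise. Even labels are `x₀ = false`, `x₂ = true`, odd ones `x₁ = false`, `x₃ = true`. -/
def skew (q : F) (i j : Bool) : F := if i = j then q ^ 2 else (q ^ 2)⁻¹

theorem skew_mul (hq : q ≠ 0) (i j : Bool) : skew q i j * skew q i (!j) = 1 := by
  cases i <;> cases j <;> simp [skew, hq]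

theorem skew_comm (i j : Bool) : skew q i j = skew q j i := by
  simp [skew, eq_comm]

theorem three_q_skew (hq : q ≠ 0) (hq2 : q ^ 2 ≠ 1) (i j : Bool) :
    (q ^ 3 - q⁻¹ ^ 3) / (q - q⁻¹) = skew q i j + 1 + skew q i (!j) := by
  rw [three_q hq hq2]
  cases i <;> cases j <;> simp [skew] <;> ring

variable (hq : q ≠ 0) (hq2 : q ^ 2 ≠ 1)

/-- The algebra map `u ↦ [[σ(u), δ(u)], [0, u]]` on `SerreAlg F q`, where `σ` and `δ` describe how
the odd generator labelled `i` moves past even elements: `x u = σ(u) x + δ(u)`. -/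
def theta (i : Bool) : SerreAlg F q →ₐ[F] Matrix (Fin 2) (Fin 2) (SerreAlg F q) :=
  serreLift (fun j => skewMat (skew q i j) (sy F q j)) fun j =>
    qSerre_skewMat (skew_mul hq i j) (three_q_skew hq hq2 i j) (qSerre_sy j)

/-- The second row of `theta i u` is `(0, u)`, so the first row `(σ(u), δ(u))` determines it. -/
theorem theta_row (i : Bool) (u : SerreAlg F q) :
    theta hq hq2 i u 1 0 = 0 ∧ theta hq hq2 i u 1 1 = u := by
  induction u using sy_induction with
  | one => simp
  | mul j u hu => simp [theta, skewMat, Matrix.mul_apply, Fin.sum_univ_two] at hu ⊢; simp [hu]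
  | add u v hu hv => simp [hu, hv]
  | smul c u hu => simp [hu]

/-- The rules `σ(yu) = s y σ(u)` and `δ(yu) = s y δ(u) + (1 - s) u` for a generator `y`. -/
theorem theta_mul (i j : Bool) (u : SerreAlg F q) :
    theta hq hq2 i (sy F q j * u) 0 0 = skew q i j • (sy F q j * theta hq hq2 i u 0 0) ∧
    theta hq hq2 i (sy F q j * u) 0 1 =
      skew q i j • (sy F q j * theta hq hq2 i u 0 1) + (1 - skew q i j) • u := by
  have h := theta_row hq hq2 i u
  have e : theta hq hq2 i (sy F q j) = skewMat (skew q i j) (sy F q j) := by simp [theta]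
  rw [map_mul, e, Matrix.mul_apply, Matrix.mul_apply, Fin.sum_univ_two, Fin.sum_univ_two, h.1, h.2]
  simp [skewMat]

/-! ### The action on `U ⊗ U` -/

open TensorProduct

/-- The action of even elements on `U ⊗ U`. -/
def evenAct : SerreAlg F q →ₐ[F] Module.End F (SerreAlg F q ⊗[F] SerreAlg F q) :=
  (Algebra.lmul F _).comp Algebra.TensorProduct.includeLeft

@[simp] theorem evenAct_tmul (w u v : SerreAlg F q) :
    evenAct w (u ⊗ₜ[F] v) = (w * u) ⊗ₜ[F] v := by
  simp [evenAct]

/-- The operator `u ⊗ v ↦ σ(u) ⊗ xv + δ(u) ⊗ v` of the odd generator `x` labelled `i`. -/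
def oddAct (i : Bool) : Module.End F (SerreAlg F q ⊗[F] SerreAlg F q) :=
  TensorProduct.map (Matrix.entryLinearMap F _ 0 0 ∘ₗ (theta hq hq2 i).toLinearMap)
      (LinearMap.mulLeft F (sy F q i)) +
    TensorProduct.map (Matrix.entryLinearMap F _ 0 1 ∘ₗ (theta hq hq2 i).toLinearMap)
      LinearMap.id

theorem oddAct_tmul (i : Bool) (u v : SerreAlg F q) :
    oddAct hq hq2 i (u ⊗ₜ[F] v) =
      theta hq hq2 i u 0 0 ⊗ₜ[F] (sy F q i * v) + theta hq hq2 i u 0 1 ⊗ₜ[F] v := by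
  simp [oddAct]

@[simp] theorem oddAct_one_tmul (i : Bool) (v : SerreAlg F q) :
    oddAct hq hq2 i (1 ⊗ₜ[F] v) = 1 ⊗ₜ[F] (sy F q i * v) := by
  simp [oddAct_tmul]

/-- The mixed relations of `□_q` hold for the operators. -/
theorem oddAct_mul_evenAct (i j : Bool) :
    oddAct hq hq2 i * evenAct (sy F q j) =
      skew q i j • (evenAct (sy F q j) * oddAct hq hq2 i) + (1 - skew q i j) • 1 := by
  refine TensorProduct.ext' fun u v => ?_
  obtain ⟨h1, h2⟩ := theta_mul hq hq2 i j u
  simp only [Module.End.mul_apply, LinearMap.add_apply, LinearMap.smul_apply, Module.End.one_apply,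
    evenAct_tmul, oddAct_tmul, h1, h2, map_add, add_tmul, ← smul_tmul', smul_add]
  abel

/-- The odd Serre relations: by induction on the first tensor factor, since the Serre expression
skew-commutes with the even operators and acts on `1 ⊗ U` by zero. -/
theorem qSerre_oddAct (i : Bool) :
    qSerre q (oddAct hq hq2 i) (oddAct hq hq2 (!i)) = 0 := by
  refine TensorProduct.ext' fun u v => ?_
  rw [LinearMap.zero_apply]
  induction u using sy_induction with
  | one =>
    have h : (1 : SerreAlg F q) ⊗ₜ[F] (qSerre q (sy F q i) (sy F q (!i)) * v) = 0 := by
      rw [qSerre_sy, zero_mul, tmul_zero]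
    simpa [qSerre, pow_succ, sub_mul, add_mul, tmul_sub, tmul_add, mul_assoc] using h
  | mul j u hu =>
    have h := qSerre_mul_of_skew (q := q) (s := skew q i j) (t := skew q (!i) j)
      (by rw [skew_comm, skew_comm (!i)]; exact skew_mul hq j i)
      (by rw [skew_comm, skew_comm (!i)]; exact three_q_skew hq hq2 j i)
      (oddAct_mul_evenAct hq hq2 i j) (oddAct_mul_evenAct hq hq2 (!i) j)
    have h' := LinearMap.congr_fun h (u ⊗ₜ v)
    simpa only [Module.End.mul_apply, evenAct_tmul, LinearMap.smul_apply, hu, map_zero,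
      smul_zero] using h'
  | add u w hu hw => rw [add_tmul, map_add, hu, hw, add_zero]
  | smul c u hu => rw [← smul_tmul', map_smul, hu, smul_zero]

theorem qSerre_evenAct (i : Bool) :
    qSerre q (evenAct (sy F q i)) (evenAct (sy F q (!i))) = 0 := by
  rw [← map_qSerre, qSerre_sy, map_zero]

end SerreAlg

/-! ### The action of `□_q` -/

section Box

variable {F : Type*} [Field F] {q : F}

/-- The mixed relation for `a = x_i`, `b = x_{i+1}` with `i` even, solved for the product in which
the odd generator comes first. -/
theorem weyl_iff_of_even (hq : q ≠ 0) (hq2 : q ^ 2 ≠ 1) {A : Type*} [Ring A] [Algebra F A]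
    (a b : A) : (q - q⁻¹)⁻¹ • (q • (a * b) - q⁻¹ • (b * a)) = 1 ↔
      b * a = q ^ 2 • (a * b) + (1 - q ^ 2) • 1 := by
  rw [inv_smul_eq_iff₀ (sub_inv_ne hq hq2), ← sub_eq_zero, ← sub_eq_zero (a := b * a),
    ← smul_eq_zero_iff_right (neg_ne_zero.2 hq)]
  apply Eq.congr_left
  match_scalars <;> field_simp
  ring

/-- The mixed relation for `a = x_i`, `b = x_{i+1}` with `i` odd, solved for the product in which
the odd generator comes first. -/
theorem weyl_iff_of_odd (hq : q ≠ 0) (hq2 : q ^ 2 ≠ 1) {A : Type*} [Ring A] [Algebra F A]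
    (a b : A) : (q - q⁻¹)⁻¹ • (q • (a * b) - q⁻¹ • (b * a)) = 1 ↔
      a * b = (q ^ 2)⁻¹ • (b * a) + (1 - (q ^ 2)⁻¹) • 1 := by
  rw [inv_smul_eq_iff₀ (sub_inv_ne hq hq2), ← sub_eq_zero, ← sub_eq_zero (a := a * b),
    ← smul_eq_zero_iff_right (inv_ne_zero hq)]
  apply Eq.congr_left
  match_scalars
  all_goals field_simp

open TensorProduct

variable (hq : q ≠ 0) (hq2 : q ^ 2 ≠ 1)

/-- The operators of the four generators of `□_q` on `U ⊗ U`. -/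
def genAct : ZMod 4 → Module.End F (SerreAlg F q ⊗[F] SerreAlg F q) :=
  ![evenAct (sy F q false), oddAct hq hq2 false, evenAct (sy F q true), oddAct hq hq2 true]

theorem genAct_weyl (i : ZMod 4) :
    (q - q⁻¹)⁻¹ • (q • (genAct hq hq2 i * genAct hq hq2 (i + 1))
      - q⁻¹ • (genAct hq hq2 (i + 1) * genAct hq hq2 i)) = 1 := by
  fin_cases i
  · exact (weyl_iff_of_even hq hq2 _ _).2 (oddAct_mul_evenAct hq hq2 false false)
  · exact (weyl_iff_of_odd hq hq2 _ _).2 (oddAct_mul_evenAct hq hq2 false true)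
  · exact (weyl_iff_of_even hq hq2 _ _).2 (oddAct_mul_evenAct hq hq2 true true)
  · exact (weyl_iff_of_odd hq hq2 _ _).2 (oddAct_mul_evenAct hq hq2 true false)

theorem genAct_serre (i : ZMod 4) :
    qSerre q (genAct hq hq2 i) (genAct hq hq2 (i + 2)) = 0 := by
  fin_cases i
  · exact qSerre_evenAct false
  · exact qSerre_oddAct hq hq2 false
  · exact qSerre_evenAct true
  · exact qSerre_oddAct hq hq2 true

/-- The action of `□_q` on `U ⊗ U`. -/
def boxAct : Box F q →ₐ[F] Module.End F (SerreAlg F q ⊗[F] SerreAlg F q) :=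
  RingQuot.liftAlgHom F ⟨FreeAlgebra.lift F (genAct hq hq2), by
    rintro _ _ (i | i)
    · simpa only [map_smul, map_sub, map_mul, map_one, FreeAlgebra.lift_ι_apply] using
        genAct_weyl hq hq2 i
    · simpa only [map_qSerre, map_zero, FreeAlgebra.lift_ι_apply] using genAct_serre hq hq2 i⟩

theorem boxAct_bx (i : ZMod 4) : boxAct hq hq2 (bx F q i) = genAct hq hq2 i := by
  simp [boxAct, bx]

/-! ### Even and odd elements of `□_q` -/

theorem bx_weyl (i : ZMod 4) :
    (q - q⁻¹)⁻¹ • (q • (bx F q i * bx F q (i + 1)) - q⁻¹ • (bx F q (i + 1) * bx F q i)) = 1 := by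
  simpa [bx] using RingQuot.mkAlgHom_rel F (BoxRel.weyl (q := q) i)

theorem bx_serre (i : ZMod 4) : qSerre q (bx F q i) (bx F q (i + 2)) = 0 := by
  rw [bx, bx, ← map_qSerre, RingQuot.mkAlgHom_rel F (BoxRel.serre i), map_zero]

/-- The generators `x₀` (label `false`) and `x₂` (label `true`). -/
def evenGen (F : Type*) [Field F] (q : F) (i : Bool) : Box F q := bx F q (bif i then 2 else 0)

/-- The generators `x₁` (label `false`) and `x₃` (label `true`). -/
def oddGen (F : Type*) [Field F] (q : F) (i : Bool) : Box F q := bx F q (bif i then 3 else 1)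

theorem oddGen_mul_evenGen (hq : q ≠ 0) (hq2 : q ^ 2 ≠ 1) (i j : Bool) :
    oddGen F q i * evenGen F q j =
      skew q i j • (evenGen F q j * oddGen F q i) + (1 - skew q i j) • 1 := by
  cases i <;> cases j
  · exact (weyl_iff_of_even hq hq2 _ _).1 (bx_weyl 0)
  · exact (weyl_iff_of_odd hq hq2 _ _).1 (bx_weyl 1)
  · exact (weyl_iff_of_odd hq hq2 _ _).1 (bx_weyl 3)
  · exact (weyl_iff_of_even hq hq2 _ _).1 (bx_weyl 2)

/-- The map from `SerreAlg F q` onto the even subalgebra. -/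
def evenHom (F : Type*) [Field F] (q : F) : SerreAlg F q →ₐ[F] Box F q :=
  serreLift (evenGen F q) fun i => by cases i <;> exact bx_serre _

/-- The map from `SerreAlg F q` onto the odd subalgebra. -/
def oddHom (F : Type*) [Field F] (q : F) : SerreAlg F q →ₐ[F] Box F q :=
  serreLift (oddGen F q) fun i => by cases i <;> exact bx_serre _

theorem boxAct_evenHom (w u v : SerreAlg F q) :
    boxAct hq hq2 (evenHom F q w) (u ⊗ₜ v) = (w * u) ⊗ₜ v := by
  induction w using sy_induction with
  | one => simp
  | mul i w hw =>
    have h : boxAct hq hq2 (evenGen F q i) = evenAct (sy F q i) := by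
      cases i <;> exact boxAct_bx hq hq2 _
    rw [map_mul, map_mul, Module.End.mul_apply, hw, evenHom, serreLift_sy, h, evenAct_tmul,
      mul_assoc]
  | add a b ha hb => rw [map_add, map_add, LinearMap.add_apply, ha, hb, add_mul, add_tmul]
  | smul c a ha => rw [map_smul, map_smul, LinearMap.smul_apply, ha, smul_mul_assoc, smul_tmul']

theorem boxAct_oddHom (w v : SerreAlg F q) :
    boxAct hq hq2 (oddHom F q w) (1 ⊗ₜ v) = 1 ⊗ₜ (w * v) := by
  induction w using sy_induction with
  | one => simp
  | mul i w hw =>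
    have h : boxAct hq hq2 (oddGen F q i) = oddAct hq hq2 i := by
      cases i <;> exact boxAct_bx hq hq2 _
    rw [map_mul, map_mul, Module.End.mul_apply, hw, oddHom, serreLift_sy, h, oddAct_one_tmul,
      mul_assoc]
  | add a b ha hb => rw [map_add, map_add, LinearMap.add_apply, ha, hb, add_mul, tmul_add]
  | smul c a ha => rw [map_smul, map_smul, LinearMap.smul_apply, ha, smul_mul_assoc, tmul_smul]

/-- Applying an element of `□_q` to `1 ⊗ 1` inverts `u ⊗ v ↦ evenHom u * oddHom v`. -/
theorem mulMap_range_injective (hq : q ≠ 0) (hq2 : q ^ 2 ≠ 1) :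
    Function.Injective (Submodule.mulMap (Subalgebra.toSubmodule (evenHom F q).range)
      (Subalgebra.toSubmodule (oddHom F q).range)) := by
  let p : SerreAlg F q ⊗[F] SerreAlg F q →ₗ[F]
      Subalgebra.toSubmodule (evenHom F q).range ⊗[F] Subalgebra.toSubmodule (oddHom F q).range :=
    TensorProduct.map (evenHom F q).rangeRestrict.toLinearMap
      (oddHom F q).rangeRestrict.toLinearMap
  have hp : Function.Surjective p :=
    TensorProduct.map_surjective (evenHom F q).rangeRestrict_surjective
      (oddHom F q).rangeRestrict_surjective
  have hid : ((boxAct hq hq2).toLinearMap.flip (1 ⊗ₜ 1) ∘ₗ Submodule.mulMap _ _) ∘ₗ p =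
      LinearMap.id := by
    refine TensorProduct.ext' fun u v => ?_
    change boxAct hq hq2 (evenHom F q u * oddHom F q v) (1 ⊗ₜ 1) = u ⊗ₜ v
    rw [map_mul, Module.End.mul_apply, boxAct_oddHom, boxAct_evenHom, mul_one, mul_one]
  -- Surjectivity of `p` moves injectivity from `U ⊗ U` to the tensor product of the ranges.
  intro x y hxy
  obtain ⟨a, rfl⟩ := hp x
  obtain ⟨b, rfl⟩ := hp y
  have hab : a = b := by
    rw [← LinearMap.id_apply (R := F) a, ← LinearMap.id_apply (R := F) b, ← hid]
    exact congrArg ((boxAct hq hq2).toLinearMap.flip (1 ⊗ₜ 1)) hxy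
  rw [hab]

/-- An odd generator moves past any even element at the cost of a lower order term. -/
theorem oddGen_mul_mem (hq : q ≠ 0) (hq2 : q ^ 2 ≠ 1) (i : Bool) {a : Box F q}
    (ha : a ∈ (evenHom F q).range) :
    ∃ b ∈ (evenHom F q).range, ∃ c ∈ (evenHom F q).range,
      oddGen F q i * a = b * oddGen F q i + c := by
  obtain ⟨u, rfl⟩ := ha
  change ∃ b ∈ _, ∃ c ∈ _, oddGen F q i * evenHom F q u = _
  induction u using sy_induction with
  | one => exact ⟨1, one_mem _, 0, zero_mem _, by simp⟩
  | mul j u hu =>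
    obtain ⟨b, hb, c, hc, h⟩ := hu
    have hj : evenGen F q j ∈ (evenHom F q).range := ⟨sy F q j, by simp [evenHom]⟩
    refine ⟨skew q i j • (evenGen F q j * b), Subalgebra.smul_mem _ (mul_mem hj hb) _,
      skew q i j • (evenGen F q j * c) + (1 - skew q i j) • evenHom F q u,
      add_mem (Subalgebra.smul_mem _ (mul_mem hj hc) _)
        (Subalgebra.smul_mem _ (AlgHom.mem_range_self _ u) _), ?_⟩
    have e : evenHom F q (sy F q j) = evenGen F q j := by simp [evenHom]
    rw [map_mul, e, ← mul_assoc, oddGen_mul_evenGen hq hq2, add_mul, smul_mul_assoc, mul_assoc, h,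
      smul_mul_assoc, one_mul, mul_add, smul_add, smul_mul_assoc, mul_assoc, add_assoc]
  | add u v hu hv =>
    obtain ⟨b, hb, c, hc, h⟩ := hu
    obtain ⟨b', hb', c', hc', h'⟩ := hv
    refine ⟨b + b', add_mem hb hb', c + c', add_mem hc hc', ?_⟩
    rw [map_add, mul_add, h, h', add_mul]
    abel
  | smul r u hu =>
    obtain ⟨b, hb, c, hc, h⟩ := hu
    refine ⟨r • b, Subalgebra.smul_mem _ hb r, r • c, Subalgebra.smul_mem _ hc r, ?_⟩
    rw [map_smul, mul_smul_comm, h, smul_add, smul_mul_assoc]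

/-- The span of the products contains `1` and is stable under left multiplication by generators. -/
theorem mul_even_odd_eq_top (hq : q ≠ 0) (hq2 : q ^ 2 ≠ 1) :
    Subalgebra.toSubmodule (evenHom F q).range * Subalgebra.toSubmodule (oddHom F q).range = ⊤ := by
  have heven : ∀ (j : Bool), ∀ z ∈ Subalgebra.toSubmodule (evenHom F q).range *
      Subalgebra.toSubmodule (oddHom F q).range, evenGen F q j * z ∈
      Subalgebra.toSubmodule (evenHom F q).range * Subalgebra.toSubmodule (oddHom F q).range := by
    intro j z hz
    induction hz using Submodule.mul_induction_on' with
    | mem_mul_mem a ha b hb =>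
      rw [← mul_assoc]
      exact Submodule.mul_mem_mul
        (mul_mem (S := Subalgebra F (Box F q)) ⟨sy F q j, by simp [evenHom]⟩ ha) hb
    | add x _ y _ hx hy => rw [mul_add]; exact add_mem hx hy
  have hodd : ∀ (i : Bool), ∀ z ∈ Subalgebra.toSubmodule (evenHom F q).range *
      Subalgebra.toSubmodule (oddHom F q).range, oddGen F q i * z ∈
      Subalgebra.toSubmodule (evenHom F q).range * Subalgebra.toSubmodule (oddHom F q).range := by
    intro i z hz
    induction hz using Submodule.mul_induction_on' with
    | mem_mul_mem a ha b hb =>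
      obtain ⟨c, hc, d, hd, h⟩ := oddGen_mul_mem hq hq2 i ha
      rw [← mul_assoc, h, add_mul, mul_assoc]
      exact add_mem (Submodule.mul_mem_mul hc
        (mul_mem (S := Subalgebra F (Box F q)) ⟨sy F q i, by simp [oddHom]⟩ hb))
        (Submodule.mul_mem_mul hd hb)
    | add x _ y _ hx hy => rw [mul_add]; exact add_mem hx hy
  have hgen : ∀ (i : ZMod 4), ∀ z ∈ Subalgebra.toSubmodule (evenHom F q).range *
      Subalgebra.toSubmodule (oddHom F q).range, bx F q i * z ∈
      Subalgebra.toSubmodule (evenHom F q).range * Subalgebra.toSubmodule (oddHom F q).range := by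
    intro i
    have hi : i = 0 ∨ i = 1 ∨ i = 2 ∨ i = 3 := by decide +revert
    rcases hi with rfl | rfl | rfl | rfl
    · exact heven false
    · exact hodd false
    · exact heven true
    · exact hodd true
  refine eq_top_iff.2 fun z hz => ?_
  clear hz
  obtain ⟨w, rfl⟩ := RingQuot.mkAlgHom_surjective F (BoxRel F q) z
  induction w using free_induction with
  | one =>
    simpa using Submodule.mul_mem_mul
      (one_mem (evenHom F q).range : (1 : Box F q) ∈ Subalgebra.toSubmodule _)
      (one_mem (oddHom F q).range : (1 : Box F q) ∈ Subalgebra.toSubmodule _)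
  | mul i w hw =>
    rw [map_mul]
    exact hgen i _ hw
  | add u v hu hv => rw [map_add]; exact add_mem hu hv
  | smul c u hu => rw [map_smul]; exact Submodule.smul_mem _ c hu

end Box

open TensorProduct in
/-- Proposition 5.6(iii): the multiplication map
`□_q^even ⊗ □_q^odd → □_q`, `u ⊗ v ↦ uv`, is a linear isomorphism. -/
theorem stmt3 (F : Type*) [Field F] (q : F) (hq : q ≠ 0) (hq2 : q ^ 2 ≠ 1) :
    Function.Bijective
      (Submodule.mulMap
        (Subalgebra.toSubmodule (Algebra.adjoin F {bx F q 0, bx F q 2}))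
        (Subalgebra.toSubmodule (Algebra.adjoin F {bx F q 1, bx F q 3}))) := by
  have he : Algebra.adjoin F {bx F q 0, bx F q 2} = (evenHom F q).range :=
    (range_serreLift (evenGen F q) _).symm
  have ho : Algebra.adjoin F {bx F q 1, bx F q 3} = (oddHom F q).range :=
    (range_serreLift (oddGen F q) _).symm
  rw [he, ho]
  refine ⟨mulMap_range_injective hq hq2, ?_⟩
  rw [← LinearMap.range_eq_top, Submodule.mulMap_range, mul_even_odd_eq_top hq hq2]
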